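/- (Tree formula solves max balance) Let A be a finite set with at least two elements and p : A × A → (0,1]. For a ∈ A, let G_A(a) be the set of in-trees with root a on the vertex set A, i.e. directed graphs g whose edge set E(g) contains exactly one edge leaving each vertex a' ∈ A∖{a}, no edge leaving a, and such that from every vertex there is a directed path in g to a; set w(g) = ∏_{(a',a'')∈E(g)} p(a',a''), W(a) = max_{g∈G_A(a)} w(g), and ρ(a) = W(a) / max_{a'∈A} W(a'). Then max_{a∈A} ρ(a) = 1 and ρ satisfies max balance: for every nontrivial partition {A',A''} of A (nonempty disjoint sets with union A), max_{a'∈A'} ρ(a') · max_{a''∈A''} p(a',a'') = max_{a''∈A''} ρ(a'') · max_{a'∈A'} p(a'',a'). -/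

import Mathlib

/-!
Let `g` be an in-tree with root `a ∉ S`, and let `b ∈ S`. The path of `g` from `b` to `a` leaves
`S` for the first time along some edge `(c, d)`. Replacing `(c, d)` by `(a, b)` turns `g` into an
in-tree `g'` with root `c`, and `w(g') * p c d = w(g) * p a b`. Hence the maximal flow into `S` is
at most the maximal flow out of `S`, and exchanging `S` with its complement gives equality.
-/

open Set

noncomputable section

/-- `g` is an in-tree with root `root` on the vertex set `A`: every vertex other than the
root has exactly one outgoing edge, the root has none, and from every vertex there is a
directed path in `g` to the root. -/
def IsInTree {A : Type*} (root : A) (g : Finset (A × A)) : Prop :=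
  (∀ a' : A, a' ≠ root → ∃! e : A × A, e ∈ g ∧ e.1 = a') ∧
  (∀ e ∈ g, e.1 ≠ root) ∧
  (∀ v : A, Relation.ReflTransGen (fun u w => (u, w) ∈ g) v root)

section

theorem exists_first_exit_of_reflTransGen {α : Type*} {r : α → α → Prop} {S : Set α} {x y : α}
    (h : Relation.ReflTransGen r x y) (hx : x ∈ S) (hy : y ∉ S) :
    ∃ c ∈ S, ∃ d ∉ S, r c d ∧ Relation.ReflTransGen (fun u v => r u v ∧ v ∈ S) x c := by
  induction h using Relation.ReflTransGen.head_induction_on with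
  | refl => exact absurd hx hy
  | @head x z hxz _ ih =>
    by_cases hz : z ∈ S
    · obtain ⟨c, hc, d, hd, hcd, hpath⟩ := ih hz
      exact ⟨c, hc, d, hd, hcd, .head ⟨hxz, hz⟩ hpath⟩
    · exact ⟨x, hx, z, hz, hxz, .refl⟩

theorem prod_insert_erase_mul {ι M : Type*} [DecidableEq ι] [CommMonoid M] {s : Finset ι}
    {i j : ι} (hi : i ∉ s) (hj : j ∈ s) (f : ι → M) :
    (∏ k ∈ insert i (s.erase j), f k) * f j = (∏ k ∈ s, f k) * f i := by
  rw [Finset.prod_insert fun h => hi (Finset.mem_of_mem_erase h), mul_assoc,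
    Finset.prod_erase_mul s f hj, mul_comm]

variable {ι : Type*} {s : Set ι}

theorem le_biSup_of_finite {L : Type*} [ConditionallyCompleteLattice L] (hs : s.Finite)
    (f : ι → L) {i : ι} (hi : i ∈ s) : f i ≤ ⨆ i ∈ s, f i := by
  have : Nonempty L := ⟨f i⟩
  refine le_ciSup₂ (f := fun i (_ : i ∈ s) => f i) ((hs.image f).bddAbove.mono ?_) i hi
  rintro _ ⟨_, ⟨j, rfl⟩, hj, rfl⟩
  exact mem_image_of_mem f hj

variable {f : ι → ℝ}

theorem biSup_le_of_nonneg {x : ℝ} (h : ∀ i ∈ s, f i ≤ x) (hx : 0 ≤ x) : ⨆ i ∈ s, f i ≤ x :=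
  Real.iSup_le (fun i => Real.iSup_le (h i) hx) hx

theorem biSup_nonneg (hf : ∀ i ∈ s, 0 ≤ f i) : 0 ≤ ⨆ i ∈ s, f i :=
  Real.iSup_nonneg fun i => Real.iSup_nonneg (hf i)

theorem mul_biSup_of_nonneg {r : ℝ} (hr : 0 ≤ r) (s : Set ι) (f : ι → ℝ) :
    r * ⨆ i ∈ s, f i = ⨆ i ∈ s, r * f i := by
  simp only [Real.mul_iSup_of_nonneg hr]

theorem biSup_mul_of_nonneg {r : ℝ} (hr : 0 ≤ r) (s : Set ι) (f : ι → ℝ) :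
    (⨆ i ∈ s, f i) * r = ⨆ i ∈ s, f i * r := by
  simp only [Real.iSup_mul_of_nonneg hr]

end

namespace IsInTree

variable {A : Type*} {a b c d : A} {g : Finset (A × A)}

theorem eq_of_mem_of_mem (hg : IsInTree a g) (hb : (c, b) ∈ g) (hd : (c, d) ∈ g) : b = d :=
  congrArg Prod.snd <| (hg.1 c (hg.2.1 _ hb)).unique ⟨hb, rfl⟩ ⟨hd, rfl⟩

theorem star [Fintype A] [DecidableEq A] (a : A) : IsInTree a (({a}ᶜ : Finset A) ×ˢ {a}) := by
  refine ⟨fun v hv => ⟨(v, a), by simp [hv], ?_⟩, by simp, fun v => ?_⟩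
  · rintro ⟨x, y⟩ ⟨hxy, rfl⟩
    simp_all
  · rcases eq_or_ne v a with rfl | hv
    · exact .refl
    · exact .single (by simp [hv])

variable [DecidableEq A]

theorem insert_erase (hg : IsInTree a g) (hcd : (c, d) ∈ g)
    (hbc : Relation.ReflTransGen (fun u w => (u, w) ∈ g.erase (c, d)) b c) :
    IsInTree c (insert (a, b) (g.erase (c, d))) := by
  have hca : c ≠ a := hg.2.1 _ hcd
  have old_mem {v x : A} (hvx : (v, x) ∈ g) (hv : v ≠ c) :
      (v, x) ∈ insert (a, b) (g.erase (c, d)) := by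
    simp [hvx, hv]
  refine ⟨fun v hv => ?_, ?_, fun v => ?_⟩
  · rcases eq_or_ne v a with rfl | hva
    · refine ⟨(v, b), by simp, ?_⟩
      rintro e ⟨he, hev⟩
      exact (Finset.mem_insert.1 he).resolve_right
        fun h => hg.2.1 e (Finset.mem_of_mem_erase h) hev
    · obtain ⟨⟨_, x⟩, ⟨hvx, rfl⟩, hunique⟩ := hg.1 v hva
      refine ⟨_, ⟨old_mem hvx hv, rfl⟩, ?_⟩
      rintro e ⟨he, hev⟩
      rcases Finset.mem_insert.1 he with rfl | he
      · exact absurd hev.symm hva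
      · exact hunique e ⟨Finset.mem_of_mem_erase he, hev⟩
  · rintro ⟨_, x⟩ he rfl
    rcases Finset.mem_insert.1 he with he | he
    · exact hca (congrArg Prod.fst he)
    · obtain ⟨hne, hmem⟩ := Finset.mem_erase.1 he
      exact hne (by rw [hg.eq_of_mem_of_mem hmem hcd])
  · induction hg.2.2 v using Relation.ReflTransGen.head_induction_on with
    | refl =>
      exact .head (Finset.mem_insert_self _ _)
        (Relation.ReflTransGen.mono (fun _ _ => Finset.mem_insert_of_mem) _ _ hbc)
    | @head v x hvx _ ih =>
      rcases eq_or_ne v c with rfl | hv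
      · exact .refl
      · exact .head (old_mem hvx hv) ih

end IsInTree

section

variable {A : Type*}

/-- The weight `w(g)` of an edge set `g`: the product of the weights of its edges. -/
def edgeWeight {M : Type*} [CommMonoid M] (p : A → A → M) (g : Finset (A × A)) : M :=
  ∏ e ∈ g, p e.1 e.2

theorem IsInTree.exists_exchange {M : Type*} [CommMonoid M] {a b : A} {g : Finset (A × A)}
    (hg : IsInTree a g) {S : Set A} (ha : a ∉ S) (hb : b ∈ S) (p : A → A → M) :
    ∃ c ∈ S, ∃ d ∉ S, ∃ g', IsInTree c g' ∧
      edgeWeight p g' * p c d = edgeWeight p g * p a b := by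
  classical
  obtain ⟨c, hc, d, hd, hcd, hpath⟩ := exists_first_exit_of_reflTransGen (hg.2.2 b) hb ha
  have hbc : Relation.ReflTransGen (fun u w => (u, w) ∈ g.erase (c, d)) b c := by
    refine Relation.ReflTransGen.mono (fun u w ⟨huw, hw⟩ => ?_) _ _ hpath
    refine Finset.mem_erase.2 ⟨?_, huw⟩
    rintro ⟨⟩
    exact hd hw
  have hab : (a, b) ∉ g := fun h => hg.2.1 _ h rfl
  exact ⟨c, hc, d, hd, _, hg.insert_erase hcd hbc,
    prod_insert_erase_mul hab hcd fun e => p e.1 e.2⟩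

/-- The tree formula `W(a)`: the maximal weight of an in-tree with root `a`. -/
def maxInTreeWeight (p : A → A → ℝ) (a : A) : ℝ :=
  ⨆ g ∈ {g : Finset (A × A) | IsInTree a g}, edgeWeight p g

/-- The max balance equations: the maximal flow `ρ a * p a b` from `S` to its complement equals
the maximal flow back. For `S = ∅` and `S = univ` both sides are `0`, the supremum of the empty
family in `ℝ`, so all sets `S` may be allowed. -/
def IsMaxBalanced (p : A → A → ℝ) (ρ : A → ℝ) : Prop :=
  ∀ S : Set A, ⨆ a ∈ S, ρ a * ⨆ b ∈ Sᶜ, p a b = ⨆ a ∈ Sᶜ, ρ a * ⨆ b ∈ S, p a b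

theorem IsMaxBalanced.const_mul {p : A → A → ℝ} {ρ : A → ℝ} (h : IsMaxBalanced p ρ) {r : ℝ}
    (hr : 0 ≤ r) : IsMaxBalanced p fun a => r * ρ a := by
  intro S
  simp only [mul_assoc, ← mul_biSup_of_nonneg hr, h S]

variable {p : A → A → ℝ}

theorem edgeWeight_nonneg (hp : ∀ a b, 0 ≤ p a b) (g : Finset (A × A)) : 0 ≤ edgeWeight p g :=
  Finset.prod_nonneg fun e _ => hp e.1 e.2

theorem maxInTreeWeight_nonneg (hp : ∀ a b, 0 ≤ p a b) (a : A) : 0 ≤ maxInTreeWeight p a :=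
  biSup_nonneg fun g _ => edgeWeight_nonneg hp g

theorem IsInTree.edgeWeight_le_maxInTreeWeight [Finite A] {a : A} {g : Finset (A × A)}
    (hg : IsInTree a g) (p : A → A → ℝ) : edgeWeight p g ≤ maxInTreeWeight p a :=
  le_biSup_of_finite {g | IsInTree a g}.toFinite (edgeWeight p) hg

theorem IsInTree.edgeWeight_mul_le_biSup [Finite A] (hp : ∀ a b, 0 ≤ p a b) {a b : A}
    {g : Finset (A × A)} (hg : IsInTree a g) {S : Set A} (ha : a ∉ S) (hb : b ∈ S) :
    edgeWeight p g * p a b ≤ ⨆ c ∈ S, maxInTreeWeight p c * ⨆ d ∈ Sᶜ, p c d := by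
  obtain ⟨c, hc, d, hd, g', hg', hweight⟩ := hg.exists_exchange ha hb p
  calc edgeWeight p g * p a b = edgeWeight p g' * p c d := hweight.symm
    _ ≤ maxInTreeWeight p c * ⨆ d ∈ Sᶜ, p c d :=
        mul_le_mul (hg'.edgeWeight_le_maxInTreeWeight p)
          (le_biSup_of_finite Sᶜ.toFinite (p c) hd) (hp c d) (maxInTreeWeight_nonneg hp c)
    _ ≤ ⨆ c ∈ S, maxInTreeWeight p c * ⨆ d ∈ Sᶜ, p c d :=
        le_biSup_of_finite S.toFinite (fun c => maxInTreeWeight p c * ⨆ d ∈ Sᶜ, p c d) hc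

theorem biSup_maxInTreeWeight_mul_le [Finite A] (hp : ∀ a b, 0 ≤ p a b) (S : Set A) :
    ⨆ a ∈ Sᶜ, maxInTreeWeight p a * ⨆ b ∈ S, p a b ≤
      ⨆ c ∈ S, maxInTreeWeight p c * ⨆ d ∈ Sᶜ, p c d := by
  have hnonneg : 0 ≤ ⨆ c ∈ S, maxInTreeWeight p c * ⨆ d ∈ Sᶜ, p c d :=
    biSup_nonneg fun c _ =>
      mul_nonneg (maxInTreeWeight_nonneg hp c) (biSup_nonneg fun d _ => hp c d)
  refine biSup_le_of_nonneg (fun a ha => ?_) hnonneg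
  rw [mul_biSup_of_nonneg (maxInTreeWeight_nonneg hp a)]
  refine biSup_le_of_nonneg (fun b hb => ?_) hnonneg
  rw [maxInTreeWeight, biSup_mul_of_nonneg (hp a b)]
  exact biSup_le_of_nonneg (fun g hg => IsInTree.edgeWeight_mul_le_biSup hp hg ha hb) hnonneg

theorem isMaxBalanced_maxInTreeWeight [Finite A] (hp : ∀ a b, 0 ≤ p a b) :
    IsMaxBalanced p (maxInTreeWeight p) := fun S =>
  le_antisymm (by simpa only [compl_compl] using biSup_maxInTreeWeight_mul_le hp Sᶜ)
    (biSup_maxInTreeWeight_mul_le hp S)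

theorem iSup_maxInTreeWeight_pos [Finite A] {a : A} {g : Finset (A × A)} (hg : IsInTree a g)
    (hweight : 0 < edgeWeight p g) : 0 < ⨆ a, maxInTreeWeight p a :=
  hweight.trans_le <| (hg.edgeWeight_le_maxInTreeWeight p).trans <|
    le_ciSup (Set.finite_range _).bddAbove a

end

theorem stmt16_general {A : Type*} [Finite A]
    (p : A → A → ℝ) (hp : ∀ a b, 0 ≤ p a b)
    (hpos : ∃ a g, IsInTree a g ∧ 0 < ∏ e ∈ g, p e.1 e.2)
    (W : A → ℝ)
    (hW : ∀ a : A, W a = ⨆ g ∈ {g : Finset (A × A) | IsInTree a g}, ∏ e ∈ g, p e.1 e.2)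
    (ρ : A → ℝ) (hρ : ∀ a : A, ρ a = W a / ⨆ a' : A, W a') :
    (⨆ a : A, ρ a) = 1 ∧
    ∀ A' A'' : Set A, A'.Nonempty → A''.Nonempty → Disjoint A' A'' → A' ∪ A'' = Set.univ →
      (⨆ a ∈ A', ρ a * ⨆ b ∈ A'', p a b) = ⨆ a ∈ A'', ρ a * ⨆ b ∈ A', p a b := by
  obtain rfl : W = maxInTreeWeight p := funext hW
  obtain ⟨a, g, hg, hweight⟩ := hpos
  have hM : 0 < ⨆ a, maxInTreeWeight p a := iSup_maxInTreeWeight_pos hg hweight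
  obtain rfl : ρ = fun a => (⨆ a', maxInTreeWeight p a')⁻¹ * maxInTreeWeight p a :=
    funext fun a => (hρ a).trans (div_eq_inv_mul _ _)
  refine ⟨?_, fun S T _ _ hdisj hunion => ?_⟩
  · rw [← Real.mul_iSup_of_nonneg (inv_nonneg.2 hM.le), inv_mul_cancel₀ hM.ne']
  · obtain rfl : Sᶜ = T := IsCompl.compl_eq ⟨hdisj, codisjoint_iff.2 hunion⟩
    exact (isMaxBalanced_maxInTreeWeight hp).const_mul (inv_nonneg.2 hM.le) S

theorem stmt16 {A : Type*} [Fintype A] [Nontrivial A]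
    (p : A → A → ℝ) (hp : ∀ a b, p a b ∈ Set.Ioc (0:ℝ) 1)
    (W : A → ℝ)
    (hW : ∀ a : A, W a = ⨆ g ∈ {g : Finset (A × A) | IsInTree a g}, ∏ e ∈ g, p e.1 e.2)
    (ρ : A → ℝ) (hρ : ∀ a : A, ρ a = W a / ⨆ a' : A, W a') :
    (⨆ a : A, ρ a) = 1 ∧
    ∀ A' A'' : Set A, A'.Nonempty → A''.Nonempty → Disjoint A' A'' → A' ∪ A'' = Set.univ →
      (⨆ a ∈ A', ρ a * ⨆ b ∈ A'', p a b) = ⨆ a ∈ A'', ρ a * ⨆ b ∈ A', p a b := by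
  classical
  exact stmt16_general p (fun a b => (hp a b).1.le) ⟨Classical.arbitrary A, _, .star _,
    Finset.prod_pos fun e _ => (hp e.1 e.2).1⟩ W hW ρ hρ
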